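/- arXiv:2203.12248 — 3 statements merged into one kernel-verified Lean document; each statement's English description precedes it below -/
import Mathlib

section
/- For every finite simple graph H there exists a real number c_H such that every finite simple graph that does not contain a subdivision of H as a subgraph is conflict-free c_H-choosable. -/
open SimpleGraph

universe u v

namespace CFPaper

variable {V : Type u} {W : Type v}

/-- A coloring is proper if adjacent vertices get distinct colors. -/
def Proper (G : SimpleGraph V) (φ : V → ℕ) : Prop :=
  ∀ ⦃u w : V⦄, G.Adj u w → φ u ≠ φ w

/-- A coloring is conflict-free if every non-isolated vertex has a color appearing
exactly once in its open neighborhood. -/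
def ConflictFree (G : SimpleGraph V) (φ : V → ℕ) : Prop :=
  ∀ v : V, (G.neighborSet v).Nonempty →
    ∃ c : ℕ, {u : V | G.Adj v u ∧ φ u = c}.ncard = 1

/-- `G` is conflict-free `k`-choosable (k a real number). -/
def CFChoosable (G : SimpleGraph V) (k : ℝ) : Prop :=
  ∀ L : V → Finset ℕ, (∀ v, k ≤ ((L v).card : ℝ)) →
    ∃ φ : V → ℕ, (∀ v, φ v ∈ L v) ∧ Proper G φ ∧ ConflictFree G φ

/-- A coloring is `S`-achieved if for every non-isolated vertex there are `s ∈ S`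
and a color appearing exactly `s` times in its open neighborhood. -/
def SAchieved (S : Set ℕ) (G : SimpleGraph V) (φ : V → ℕ) : Prop :=
  ∀ v : V, (G.neighborSet v).Nonempty →
    ∃ s ∈ S, ∃ c : ℕ, {u : V | G.Adj v u ∧ φ u = c}.ncard = s

/-- `G` is `S`-achieved `t`-choosable. -/
def SChoosable (S : Set ℕ) (G : SimpleGraph V) (t : ℕ) : Prop :=
  ∀ L : V → Finset ℕ, (∀ v, t ≤ (L v).card) →
    ∃ φ : V → ℕ, (∀ v, φ v ∈ L v) ∧ Proper G φ ∧ SAchieved S G φ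

/-- `G` is properly `S`-achieved `t`-colorable (colors from `{1,…,t}`). -/
def SColorable (S : Set ℕ) (G : SimpleGraph V) (t : ℕ) : Prop :=
  ∃ φ : V → ℕ, (∀ v, φ v ∈ Finset.Icc 1 t) ∧ Proper G φ ∧ SAchieved S G φ

/-- `G` has a proper conflict-free coloring with colors from `{1,…,t}`. -/
def PCFColorable (G : SimpleGraph V) (t : ℕ) : Prop :=
  ∃ φ : V → ℕ, (∀ v, φ v ∈ Finset.Icc 1 t) ∧ Proper G φ ∧ ConflictFree G φ

/-- The proper conflict-free chromatic number. -/
noncomputable def chiPCF (G : SimpleGraph V) : ℕ := sInf {t : ℕ | PCFColorable G t}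

/-- `(B x : x : ι)` is a tree-decomposition of `G` with underlying tree `T`. -/
structure IsTreeDecomp (G : SimpleGraph V) {ι : Type*} (T : SimpleGraph ι) (B : ι → Set V) :
    Prop where
  tree : T.IsTree
  bags_connected : ∀ vv : V, (T.induce {x : ι | vv ∈ B x}).Connected
  edge_in_bag : ∀ ⦃a b : V⦄, G.Adj a b → ∃ x : ι, a ∈ B x ∧ b ∈ B x

/-- The torso of a tree-decomposition at a node `x`. -/
def torso (G : SimpleGraph V) {ι : Type*} (T : SimpleGraph ι) (B : ι → Set V) (x : ι) :
    SimpleGraph (B x) :=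
  SimpleGraph.fromRel fun a b =>
    G.Adj a b ∨ ∃ y : ι, T.Adj x y ∧ (a : V) ∈ B y ∧ (b : V) ∈ B y

/-- The frame of a tree-decomposition at a node `x`. -/
def frame (G : SimpleGraph V) {ι : Type*} (T : SimpleGraph ι) (B : ι → Set V) (x : ι) :
    Set (Set (B x)) :=
  {s : Set (B x) | ∃ y : ι, T.Adj x y ∧ s = {a : B x | (a : V) ∈ B y}}

/-- A subgraph `H` of `G` is `C`-compatible: every edge of `H` has both ends in some member
of `C`. -/
def Compatible (C : Set (Set V)) (H : SimpleGraph V) : Prop :=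
  ∀ ⦃a b : V⦄, H.Adj a b → ∃ c ∈ C, a ∈ c ∧ b ∈ c

/-- `G` is `(S,C,L,t)`-extendable. -/
def Extendable (S : Set ℕ) (G : SimpleGraph V) (C : Set (Set V)) (L : V → Finset ℕ)
    (t : ℕ) : Prop :=
  ∀ (Wc : Set V), G.IsClique Wc → Wc.ncard ≤ t →
  ∀ (H : SimpleGraph V), H ≤ G → Compatible C H →
  ∀ (φW : V → ℕ), (∀ w ∈ Wc, φW w ∈ L w) →
    (∀ a ∈ Wc, ∀ b ∈ Wc, G.Adj a b → φW a ≠ φW b) →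
  ∀ (f : V → ℕ) (g : V → Bool),
  ∃ φ : V → ℕ, (∀ w, φ w ∈ L w) ∧ Proper G φ ∧ (∀ w ∈ Wc, φ w = φW w) ∧
    (∀ w ∈ Wc, g w = false → ∀ u : V, G.Adj w u → u ∉ Wc → φ u ≠ f w) ∧
    (∀ w : V, (w ∉ Wc ∨ (w ∈ Wc ∧ g w = true)) →
      (((G \ H).neighborSet w = ∅) ∨
        ∃ c : ℕ, {u : V | (G \ H).Adj w u ∧ φ u = c}.ncard ∈ S))

/-- `H` is a minor of `G` (branch-set definition). -/
def IsMinor (H : SimpleGraph W) (G : SimpleGraph V) : Prop :=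
  ∃ ρ : W → Set V,
    (∀ w : W, (G.induce (ρ w)).Connected) ∧
    (Pairwise fun a b => Disjoint (ρ a) (ρ b)) ∧
    ∀ ⦃a b : W⦄, H.Adj a b → ∃ x ∈ ρ a, ∃ y ∈ ρ b, G.Adj x y

/-- The spanning subgraph of `G` whose edges are those between `A` and its complement. -/
def crossGraph (G : SimpleGraph V) (A : Set V) : SimpleGraph V :=
  SimpleGraph.fromRel fun x y => G.Adj x y ∧ x ∈ A ∧ y ∉ A

/-- The odd contraction of `G` determined by the bipartition `{A, Aᶜ}`: contract each
connected component of the spanning bipartite subgraph between `A` and `Aᶜ`. -/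
def oddContract (G : SimpleGraph V) (A : Set V) :
    SimpleGraph ((crossGraph G A).ConnectedComponent) :=
  SimpleGraph.fromRel fun Ct Dt =>
    ∃ x y : V, (crossGraph G A).connectedComponentMk x = Ct ∧
      (crossGraph G A).connectedComponentMk y = Dt ∧ G.Adj x y

/-- `OddContractions G H`: `H` is obtained from `G` by repeatedly applying odd
contractions. -/
inductive OddContractions : ∀ {α : Type u}, SimpleGraph α → ∀ {β : Type u}, SimpleGraph β → Prop
  | refl {α : Type u} (G : SimpleGraph α) : OddContractions G G
  | step {α : Type u} (G : SimpleGraph α) (A : Set α) {β : Type u} {H : SimpleGraph β} :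
      OddContractions (oddContract G A) H → OddContractions G H

/-- `H` is an odd minor of `G`: `H` is isomorphic to a graph obtained from a subgraph of `G`
by repeatedly applying odd contractions. -/
def IsOddMinor (H : SimpleGraph W) (G : SimpleGraph V) : Prop :=
  ∃ (s : Set V) (G₀ : SimpleGraph s), G₀ ≤ G.induce s ∧
    ∃ (β : Type u) (K : SimpleGraph β), OddContractions G₀ K ∧ Nonempty (H ≃g K)

/-- The graph obtained from `H` by subdividing each edge `e` exactly `n e` times, where
`σ` chooses an orientation of each edge. -/
def subdivGraph (H : SimpleGraph W) (σ : H.edgeSet → W × W) (n : H.edgeSet → ℕ) :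
    SimpleGraph (W ⊕ (Σ e : H.edgeSet, Fin (n e))) :=
  SimpleGraph.fromRel fun a b =>
    (∃ (x y : W) (h : H.Adj x y),
        a = Sum.inl x ∧ b = Sum.inl y ∧ n ⟨s(x, y), H.mem_edgeSet.mpr h⟩ = 0) ∨
    (∃ (x : W) (p : Σ e : H.edgeSet, Fin (n e)), a = Sum.inl x ∧ b = Sum.inr p ∧
        ((x = (σ p.1).1 ∧ (p.2 : ℕ) = 0) ∨ (x = (σ p.1).2 ∧ (p.2 : ℕ) = n p.1 - 1))) ∨
    (∃ p q : Σ e : H.edgeSet, Fin (n e), a = Sum.inr p ∧ b = Sum.inr q ∧ p.1 = q.1 ∧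
        (p.2 : ℕ) + 1 = (q.2 : ℕ))

/-- `σ` is a valid orientation of the edges of `H`. -/
def ValidOrientation (H : SimpleGraph W) (σ : H.edgeSet → W × W) : Prop :=
  ∀ e : H.edgeSet, s((σ e).1, (σ e).2) = (e : Sym2 W)

/-- `G` contains a subdivision of `H` as a subgraph. -/
def ContainsSubdivision (H : SimpleGraph W) (G : SimpleGraph V) : Prop :=
  ∃ (σ : H.edgeSet → W × W) (n : H.edgeSet → ℕ), ValidOrientation H σ ∧
    ∃ f : subdivGraph H σ n →g G, Function.Injective f

/-- The strong product of two graphs. -/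
def strongProd {α : Type*} {β : Type*} (A : SimpleGraph α) (B : SimpleGraph β) :
    SimpleGraph (α × β) :=
  SimpleGraph.fromRel fun p q =>
    (A.Adj p.1 q.1 ∧ p.2 = q.2) ∨ (p.1 = q.1 ∧ B.Adj p.2 q.2) ∨
      (A.Adj p.1 q.1 ∧ B.Adj p.2 q.2)


/-- A layering of `G`. -/
def IsLayering (G : SimpleGraph V) (Vl : ℕ → Set V) : Prop :=
  (∀ vv : V, ∃ i : ℕ, vv ∈ Vl i) ∧ (Pairwise fun i j => Disjoint (Vl i) (Vl j)) ∧
  ∀ ⦃a b : V⦄, G.Adj a b → ∃ i : ℕ, a ∈ Vl i ∪ Vl (i + 1) ∧ b ∈ Vl i ∪ Vl (i + 1)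

/-!
A graph of large average degree contains a subdivision of `H`, by induction on the number of edges
of `H`: a maximal connected set `U` whose contraction keeps the graph dense has a dense
neighbourhood, which contains a subdivision of `H` without one edge, and the missing path runs
through `U`.

Now let `G` contain no subdivision of `H`, and let `S` be a finite set of vertices. Join as many
pairs of vertices of `S` as possible by disjoint paths of length two through vertices outside `S`.
Adding these pairs as edges to `G[S]` gives a graph without a subdivision of `H`, hence a sparse
one, and there are few edges from `S` to the middle vertices of the paths. So some `v ∈ S` has few
neighbours of both kinds; by maximality, its other neighbours outside `S` have no neighbours in `S`
except `v` and the vertices joined to `v`.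

Hence the vertices can be coloured greedily so that every vertex keeps a neighbour, its witness,
whose colour is unique among its coloured neighbours: a new vertex `v` has to avoid the colours of
boundedly many neighbours and witnesses. Compactness reduces infinite graphs to finite sets.
-/

open Finset Function

/-- `a` and `b` are joined by a walk of `G` all of whose vertices lie in `S`. -/
def ReachableIn (G : SimpleGraph V) (S : Set V) (a b : V) : Prop :=
  ∃ p : G.Walk a b, ∀ z ∈ p.support, z ∈ S

namespace ReachableIn

variable {G J : SimpleGraph V} {S T : Set V} {a b c : V}

lemma refl (ha : a ∈ S) : ReachableIn G S a a :=
  ⟨.nil, by simpa using ha⟩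

lemma of_adj (h : G.Adj a b) (ha : a ∈ S) (hb : b ∈ S) : ReachableIn G S a b :=
  ⟨h.toWalk, by simp [ha, hb]⟩

lemma symm : ReachableIn G S a b → ReachableIn G S b a
  | ⟨p, hp⟩ => ⟨p.reverse, by simpa using hp⟩

lemma trans : ReachableIn G S a b → ReachableIn G S b c → ReachableIn G S a c
  | ⟨p, hp⟩, ⟨q, hq⟩ =>
    ⟨p.append q, fun z hz ↦ ((Walk.mem_support_append_iff p q).1 hz).elim (hp z) (hq z)⟩

lemma mono (hST : S ⊆ T) : ReachableIn G S a b → ReachableIn G T a b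
  | ⟨p, hp⟩ => ⟨p, fun z hz ↦ hST (hp z hz)⟩

lemma lift (hST : S ⊆ T)
    (hadj : ∀ x ∈ S, ∀ y ∈ S, J.Adj x y → ReachableIn G T x y) :
    ReachableIn J S a b → ReachableIn G T a b := by
  rintro ⟨p, hp⟩
  induction p with
  | nil => exact refl (hST (hp _ (by simp)))
  | cons hxy q ih =>
    exact (hadj _ (hp _ (by simp)) _ (hp _ (by simp)) hxy).trans
      (ih fun z hz ↦ hp z (by simp [hz]))

lemma of_preconnected (hS : (G.induce S).Preconnected) (ha : a ∈ S) (hb : b ∈ S) :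
    ReachableIn G S a b := by
  obtain ⟨p⟩ := hS ⟨a, ha⟩ ⟨b, hb⟩
  have hp : ∀ z ∈ (p.map (Embedding.induce S).toHom).support, z ∈ S := by
    rw [Walk.support_map]
    exact fun z hz ↦ by obtain ⟨y, -, rfl⟩ := List.mem_map.1 hz; exact y.2
  exact ⟨_, hp⟩

end ReachableIn

section Subdivision

variable {G : SimpleGraph V} {H : SimpleGraph W} {σ : H.edgeSet → W × W} {f : W → V}

/-- The map from a subdivision of `H` to `G` given by the images `f` of the vertices of `H`
together with a walk `p e` for each edge `e` of `H`; the interior vertices of `p e` are those of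
index `1, …, (p e).length - 1`. -/
def subdivMap (f : W → V) (p : ∀ e, G.Walk (f (σ e).1) (f (σ e).2)) :
    W ⊕ (Σ e : H.edgeSet, Fin ((p e).length - 1)) → V :=
  Sum.elim f fun q ↦ (p q.1).getVert (q.2 + 1)

lemma adj_of_fromRel {α : Type*} {r : α → α → Prop} {F : α → V}
    (h : ∀ a b, r a b → G.Adj (F a) (F b)) {a b : α} (hab : (fromRel r).Adj a b) :
    G.Adj (F a) (F b) :=
  hab.2.elim (h a b) fun hba ↦ (h b a hba).symm

variable {p : ∀ e, G.Walk (f (σ e).1) (f (σ e).2)}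

lemma adj_of_path_length_eq_one (hσ : ValidOrientation H σ) {x y : W} (hxy : H.Adj x y)
    (hp : (p ⟨s(x, y), hxy⟩).length = 1) : G.Adj (f x) (f y) := by
  have h : Sym2.map f s((σ ⟨s(x, y), hxy⟩).1, (σ ⟨s(x, y), hxy⟩).2) ∈ G.edgeSet :=
    Walk.adj_of_length_eq_one hp
  rwa [hσ] at h

lemma subdivMap_adj (hσ : ValidOrientation H σ) (hp : ∀ e, 0 < (p e).length)
    {a b : W ⊕ (Σ e : H.edgeSet, Fin ((p e).length - 1))}
    (hab : (subdivGraph H σ fun e ↦ (p e).length - 1).Adj a b) :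
    G.Adj (subdivMap f p a) (subdivMap f p b) := by
  unfold subdivGraph at hab
  refine adj_of_fromRel ?_ hab
  rintro _ _ (⟨x, y, hxy, rfl, rfl, hlen⟩ | ⟨_, ⟨e, i⟩, rfl, rfl, ⟨rfl, hi⟩ | ⟨rfl, hi⟩⟩ |
    ⟨⟨e, i⟩, ⟨_, j⟩, rfl, rfl, rfl, hij⟩)
  · have hlen' : (p ⟨s(x, y), hxy⟩).length - 1 = 0 := hlen
    have := hp ⟨s(x, y), hxy⟩
    exact adj_of_path_length_eq_one (p := p) hσ hxy (by omega)
  · have hlt : (i : ℕ) < (p e).length - 1 := i.2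
    simpa [subdivMap, show (i : ℕ) = 0 from hi] using
      (p e).adj_getVert_succ (i := 0) (by omega)
  · have hlt : (i : ℕ) < (p e).length - 1 := i.2
    have hi' : (i : ℕ) = (p e).length - 1 - 1 := hi
    have hi'' : (i : ℕ) + 1 + 1 = (p e).length := by omega
    have hlast := (p e).adj_getVert_succ (i := i + 1) (by omega)
    rw [hi'', Walk.getVert_length] at hlast
    exact hlast.symm
  · have hlt : (j : ℕ) < (p e).length - 1 := j.2
    have hij' : (j : ℕ) = i + 1 := hij.symm
    simpa [subdivMap, hij'] using (p e).adj_getVert_succ (i := i + 1) (by omega)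

variable {P : H.edgeSet → Set V}

lemma subdivMap_injective (hf : Injective f) (hp : ∀ e, (p e).IsPath)
    (hpP : ∀ e i, 0 < i → i < (p e).length → (p e).getVert i ∈ P e)
    (hfP : ∀ e w, f w ∉ P e) (hP : Pairwise (Disjoint on P)) : Injective (subdivMap f p) := by
  have hmem : ∀ (e : H.edgeSet) (i : Fin ((p e).length - 1)), (p e).getVert (i + 1) ∈ P e :=
    fun e i ↦ hpP e _ (by omega) (by omega)
  rintro (x | ⟨e, i⟩) (y | ⟨e', j⟩) hxy
  all_goals simp only [subdivMap, Sum.elim_inl, Sum.elim_inr] at hxy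
  · exact congrArg Sum.inl (hf hxy)
  · exact absurd (hxy ▸ hmem e' j) (hfP e' x)
  · exact absurd (hxy ▸ hmem e i) (hfP e y)
  · obtain rfl : e = e' := by
      by_contra hee
      exact Set.disjoint_left.1 (hP hee) (hmem e i) (hxy ▸ hmem e' j)
    have hij := (hp e).getVert_injOn (by rw [Set.mem_ofPred_eq]; omega)
      (by rw [Set.mem_ofPred_eq]; omega) hxy
    rw [Fin.ext (Nat.succ_injective hij)]

lemma containsSubdivision_of_paths (hσ : ValidOrientation H σ) (hf : Injective f)
    (hp : ∀ e, (p e).IsPath)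
    (hpP : ∀ e i, 0 < i → i < (p e).length → (p e).getVert i ∈ P e)
    (hfP : ∀ e w, f w ∉ P e) (hP : Pairwise (Disjoint on P)) : ContainsSubdivision H G := by
  have hpos : ∀ e, 0 < (p e).length := by
    intro e
    have hadj : H.Adj (σ e).1 (σ e).2 := by rw [← H.mem_edgeSet, hσ e]; exact e.2
    exact Nat.pos_of_ne_zero fun h ↦ hadj.ne (hf (Walk.eq_of_length_eq_zero h))
  exact ⟨σ, _, hσ, ⟨subdivMap f p, subdivMap_adj hσ hpos⟩, subdivMap_injective hf hp hpP hfP hP⟩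

end Subdivision

/-- A model of `H` as a topological minor of `G` inside `A`. Only a set `inner e` containing the
inner vertices of the path for `e` is recorded, and it is required to connect the ends of `e`.
The sets `inner e` for non-edges `e` are subject to the same disjointness conditions, and can be
taken empty. -/
structure TopMinorModel (H : SimpleGraph W) (G : SimpleGraph V) (A : Set V) where
  /-- The vertex of `G` representing a vertex of `H`. -/
  branch : W ↪ V
  /-- The vertices available to the path representing an edge of `H`. -/
  inner : Sym2 W → Set V
  branch_mem : ∀ w, branch w ∈ A
  inner_subset : ∀ e, inner e ⊆ A
  branch_notMem_inner : ∀ e w, branch w ∉ inner e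
  disjoint_inner : Pairwise (Disjoint on inner)
  reachableIn : ∀ ⦃x y⦄, H.Adj x y →
    ReachableIn G (inner s(x, y) ∪ branch '' s(x, y)) (branch x) (branch y)

namespace TopMinorModel

variable {G : SimpleGraph V} {H : SimpleGraph W} {A : Set V}

lemma exists_path (M : TopMinorModel H G A) {x y : W} (hxy : H.Adj x y) :
    ∃ p : G.Walk (M.branch x) (M.branch y), p.IsPath ∧
      ∀ i, 0 < i → i < p.length → p.getVert i ∈ M.inner s(x, y) := by
  classical
  obtain ⟨q, hq⟩ := M.reachableIn hxy
  refine ⟨q.bypass, q.bypass_isPath, fun i hi hi' ↦ ?_⟩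
  have hinj := q.bypass_isPath.getVert_injOn
  rcases hq _ (q.support_bypass_subset_support (q.bypass.getVert_mem_support i)) with
    h | ⟨z, hz, hzi⟩
  · exact h
  obtain rfl | rfl := Sym2.mem_iff.1 hz
  · exact absurd (hinj (by simp) hi'.le (q.bypass.getVert_zero.trans hzi)) hi.ne
  · exact absurd (hinj hi'.le (by simp) (hzi.symm.trans q.bypass.getVert_length.symm)) hi'.ne

lemma containsSubdivision (M : TopMinorModel H G A) : ContainsSubdivision H G := by
  let σ : H.edgeSet → W × W := fun e ↦ Quot.out e.1
  have hσ : ValidOrientation H σ := fun e ↦ Quot.out_eq e.1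
  have hadj : ∀ e, H.Adj (σ e).1 (σ e).2 := fun e ↦ by
    rw [← H.mem_edgeSet, hσ e]; exact e.2
  choose p hp hinner using fun e ↦ M.exists_path (hadj e)
  exact containsSubdivision_of_paths hσ M.branch.injective hp (fun e ↦ hσ e ▸ hinner e)
    (fun e ↦ M.branch_notMem_inner e.1) (M.disjoint_inner.comp_of_injective Subtype.val_injective)

end TopMinorModel

section Density

variable (G : SimpleGraph V) [DecidableRel G.Adj]

lemma card_interedges_eq_sum (A B : Finset V) :
    #(G.interedges A B) = ∑ v ∈ A, #{w ∈ B | G.Adj v w} := by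
  rw [interedges_def, card_filter, sum_product]
  simp only [card_filter]

variable [DecidableEq V] {A U : Finset V} {u v : V} {c : ℕ}

lemma card_interedges_erase (hv : v ∈ A) :
    #(G.interedges A A) =
      #(G.interedges (A.erase v) (A.erase v)) + 2 * #{w ∈ A | G.Adj v w} := by
  have hdeg : ∀ w, #{x ∈ A | G.Adj w x} =
      #{x ∈ A.erase v | G.Adj w x} + if G.Adj w v then 1 else 0 := fun w ↦ by
    simp only [card_filter]
    exact (sum_erase_add A _ hv).symm
  have hback : #{w ∈ A.erase v | G.Adj w v} = #{w ∈ A | G.Adj v w} := by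
    simp [filter_erase, G.adj_comm v]
  rw [card_interedges_eq_sum, card_interedges_eq_sum, ← sum_erase_add A _ hv,
    sum_congr rfl fun w _ ↦ hdeg w, sum_add_distrib, ← card_filter, hback]
  ring

/-- The neighbours of `U` in `A \ U`. -/
def outerBoundary (A U : Finset V) : Finset V := {v ∈ A \ U | ∃ u ∈ U, G.Adj v u}

/-- For a connected `U ⊆ A`, twice the number of edges of the graph obtained from `G[A]` by
contracting `U` to a single vertex. -/
def contractionSize (A U : Finset V) : ℕ :=
  #(G.interedges (A \ U) (A \ U)) + 2 * #(outerBoundary G A U)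

variable {G}

lemma mem_outerBoundary : v ∈ outerBoundary G A U ↔ (v ∈ A ∧ v ∉ U) ∧ ∃ u ∈ U, G.Adj v u := by
  rw [outerBoundary, mem_filter, mem_sdiff]

lemma contractionSize_singleton (hv : v ∈ A) :
    contractionSize G A {v} = #(G.interedges A A) := by
  have hbd : outerBoundary G A {v} = {w ∈ A | G.Adj v w} := by
    ext w
    simp only [mem_outerBoundary, mem_filter, mem_singleton, exists_eq_left, G.adj_comm v]
    exact ⟨fun h ↦ ⟨h.1.1, h.2⟩, fun h ↦ ⟨⟨h.1, h.2.ne⟩, h.2⟩⟩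
  rw [contractionSize, hbd, sdiff_singleton_eq_erase, card_interedges_erase G hv]

-- Contracting one more edge destroys that edge, and merges one pair of edges for each common
-- neighbour of its ends.
lemma contractionSize_le_insert (hv : v ∈ outerBoundary G A U) :
    contractionSize G A U ≤ contractionSize G A (insert v U) +
      2 * (#{w ∈ outerBoundary G A U | G.Adj v w} + 1) := by
  obtain ⟨⟨hvA, hvU⟩, -⟩ := mem_outerBoundary.1 hv
  have hunion : outerBoundary G A U ∪ {w ∈ A \ U | G.Adj v w} ⊆
      insert v (outerBoundary G A (insert v U)) := by
    intro w hw
    simp only [mem_insert, mem_outerBoundary]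
    by_cases hwv : w = v
    · exact .inl hwv
    rcases mem_union.1 hw with hw | hw
    · obtain ⟨⟨hwA, hwU⟩, u, hu, hwu⟩ := mem_outerBoundary.1 hw
      exact .inr ⟨⟨hwA, by simp [hwv, hwU]⟩, u, .inr hu, hwu⟩
    · obtain ⟨hw, hvw⟩ := mem_filter.1 hw
      obtain ⟨hwA, hwU⟩ := mem_sdiff.1 hw
      exact .inr ⟨⟨hwA, by simp [hwv, hwU]⟩, v, .inl rfl, hvw.symm⟩
  have hinter : outerBoundary G A U ∩ {w ∈ A \ U | G.Adj v w} ⊆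
      {w ∈ outerBoundary G A U | G.Adj v w} := fun w hw ↦
    mem_filter.2 ⟨(mem_inter.1 hw).1, (mem_filter.1 (mem_inter.1 hw).2).2⟩
  have hedges := card_interedges_erase G (mem_sdiff.2 ⟨hvA, hvU⟩)
  rw [← sdiff_insert] at hedges
  have hcard := card_union_add_card_inter (outerBoundary G A U) {w ∈ A \ U | G.Adj v w}
  have := (card_le_card hunion).trans (card_insert_le _ _)
  have := card_le_card hinter
  unfold contractionSize
  omega

lemma exists_connected_le_degree_outerBoundary (hA : A.Nonempty)
    (hdense : 2 * c * #A ≤ #(G.interedges A A)) :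
    ∃ U ⊆ A, (G.induce (U : Set V)).Connected ∧
      2 * c * (#(A \ U) + 1) ≤ contractionSize G A U ∧
      ∀ v ∈ outerBoundary G A U, c ≤ #{w ∈ outerBoundary G A U | G.Adj v w} := by
  let 𝒰 : Set (Finset V) := {U | U ⊆ A ∧ (G.induce (U : Set V)).Connected ∧
    2 * c * (#(A \ U) + 1) ≤ contractionSize G A U}
  have hfin : 𝒰.Finite := A.powerset.finite_toSet.subset fun U hU ↦ mem_powerset.2 hU.1
  obtain ⟨v₀, hv₀⟩ := hA
  have hsingleton : {v₀} ∈ 𝒰 := by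
    refine ⟨singleton_subset_iff.2 hv₀, ?_, ?_⟩
    · rw [coe_singleton]
      exact .of_subsingleton
    · rwa [contractionSize_singleton hv₀, sdiff_singleton_eq_erase, card_erase_add_one hv₀]
  obtain ⟨U, -, ⟨hUA, hconn, hsize⟩, hmax⟩ := hfin.exists_le_maximal hsingleton
  refine ⟨U, hUA, hconn, hsize, fun v hv ↦ ?_⟩
  by_contra! hdeg
  obtain ⟨⟨hvA, hvU⟩, u, hu, hvu⟩ := mem_outerBoundary.1 hv
  suffices insert v U ∈ 𝒰 from hvU (hmax this (subset_insert v U) (mem_insert_self v U))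
  refine ⟨insert_subset hvA hUA, ?_, ?_⟩
  · rw [coe_insert, Set.insert_eq]
    exact connected_induce_union .of_subsingleton hconn.preconnected (Set.mem_singleton v) hu hvu
  · have hle := contractionSize_le_insert hv
    have hcard : #(A \ insert v U) + 1 = #(A \ U) := by
      rw [sdiff_insert, card_erase_add_one (mem_sdiff.2 ⟨hvA, hvU⟩)]
    rw [← hcard, mul_add_one (2 * c)] at hsize
    omega

omit [DecidableEq V] in
lemma exists_connected_dense_neighbors (hA : A.Nonempty) (hc : 0 < c)
    (hdense : 2 * c * #A ≤ #(G.interedges A A)) :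
    ∃ U ⊆ A, ∃ N ⊆ A, Disjoint U N ∧ (G.induce (U : Set V)).Connected ∧
      (∀ v ∈ N, ∃ u ∈ U, G.Adj v u) ∧ N.Nonempty ∧ c * #N ≤ #(G.interedges N N) := by
  classical
  obtain ⟨B, hBA, ⟨hB, hBdense⟩, hBmin⟩ := exists_minimal_le_of_wellFoundedLT
    (fun B : Finset V ↦ B.Nonempty ∧ 2 * c * #B ≤ #(G.interedges B B)) A ⟨hA, hdense⟩
  obtain ⟨U, hUB, hconn, hsize, hdeg⟩ :=
    exists_connected_le_degree_outerBoundary hB hBdense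
  refine ⟨U, hUB.trans hBA, outerBoundary G B U, fun v hv ↦ hBA (mem_outerBoundary.1 hv).1.1,
    disjoint_right.2 fun v hv ↦ (mem_outerBoundary.1 hv).1.2, hconn,
    fun v hv ↦ (mem_outerBoundary.1 hv).2, ?_, ?_⟩
  · by_contra hN
    -- If `U` had no neighbours, deleting `U` would contradict the minimality of `B`.
    rw [contractionSize, not_nonempty_iff_eq_empty.1 hN, card_empty, mul_zero, add_zero] at hsize
    have hne : (B \ U).Nonempty := by
      by_contra h
      rw [not_nonempty_iff_eq_empty.1 h] at hsize
      simp at hsize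
      omega
    obtain ⟨u, hu⟩ := hconn.nonempty
    have hle := hBmin ⟨hne, (Nat.mul_le_mul_left _ (Nat.le_succ _)).trans hsize⟩ sdiff_subset
    exact (mem_sdiff.1 (hle (hUB hu))).2 hu
  · rw [card_interedges_eq_sum, mul_comm, ← smul_eq_mul]
    exact card_nsmul_le_sum _ _ _ hdeg

end Density

/-- An average degree that forces a subdivision of `H`: every edge of `H` costs a factor `2`, the
loss in `exists_connected_dense_neighbors`. -/
noncomputable def subdivDensity (H : SimpleGraph W) : ℕ := 2 ^ H.edgeSet.ncard * Nat.card W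

namespace TopMinorModel

variable {G : SimpleGraph V} {H : SimpleGraph W} {A : Set V}

lemma nonempty_of_edgeSet_eq_empty [Finite W] {A : Finset V} (hH : H.edgeSet = ∅)
    (hA : Nat.card W ≤ #A) : Nonempty (TopMinorModel H G A) := by
  have := Fintype.ofFinite W
  obtain ⟨g⟩ : Nonempty (W ↪ A) :=
    Embedding.nonempty_of_card_le (by
      rwa [Fintype.card_coe, ← Nat.card_eq_fintype_card])
  exact ⟨{
    branch := g.trans (Embedding.subtype _)
    inner := fun _ ↦ ∅
    branch_mem := fun w ↦ (g w).2
    inner_subset := by simp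
    branch_notMem_inner := by simp
    disjoint_inner := fun _ _ _ ↦ Set.disjoint_empty _
    reachableIn := fun x y hxy ↦ by
      have hmem : s(x, y) ∈ H.edgeSet := hxy
      simp [hH] at hmem }⟩

lemma nonempty_of_deleteEdges {e : Sym2 W} {U N : Set V}
    (M : TopMinorModel (H.deleteEdges {e}) G N) (hUA : U ⊆ A) (hNA : N ⊆ A) (hUN : Disjoint U N)
    (hU : (G.induce U).Preconnected) (hN : ∀ v ∈ N, ∃ u ∈ U, G.Adj v u) :
    Nonempty (TopMinorModel H G A) := by
  classical
  have hinner : ∀ e', update M.inner e U e' = if e' = e then U else M.inner e' :=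
    update_apply M.inner e U
  exact ⟨{
    branch := M.branch
    inner := update M.inner e U
    branch_mem := fun w ↦ hNA (M.branch_mem w)
    inner_subset := fun e' ↦ by
      rw [hinner]
      split_ifs
      exacts [hUA, (M.inner_subset e').trans hNA]
    branch_notMem_inner := fun e' w ↦ by
      rw [hinner]
      split_ifs
      exacts [Set.disjoint_right.1 hUN (M.branch_mem w), M.branch_notMem_inner e' w]
    disjoint_inner := fun e₁ e₂ hne ↦ by
      have hUinner : ∀ e', Disjoint U (M.inner e') := fun e' ↦ hUN.mono_right (M.inner_subset e')
      simp only [onFun, hinner]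
      split_ifs with h₁ h₂ h₂
      exacts [absurd (h₁.trans h₂.symm) hne, hUinner e₂, (hUinner e₁).symm, M.disjoint_inner hne]
    reachableIn := fun x y hxy ↦ by
      rw [hinner]
      split_ifs with hxye
      · obtain ⟨a, ha, hxa⟩ := hN _ (M.branch_mem x)
        obtain ⟨b, hb, hyb⟩ := hN _ (M.branch_mem y)
        exact (ReachableIn.of_adj hxa (.inr ⟨x, by simp, rfl⟩) (.inl ha)).trans
          (((ReachableIn.of_preconnected hU ha hb).mono Set.subset_union_left).trans
            (ReachableIn.of_adj hyb.symm (.inl hb) (.inr ⟨y, by simp, rfl⟩)))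
      · exact M.reachableIn (by simp [hxy, hxye]) }⟩

lemma nonempty_of_dense [Finite W] [DecidableRel G.Adj] {A : Finset V} (hA : A.Nonempty)
    (hdense : subdivDensity H * #A ≤ #(G.interedges A A)) :
    Nonempty (TopMinorModel H G A) := by
  induction hk : H.edgeSet.ncard generalizing H A with
  | zero =>
    rw [subdivDensity, hk, pow_zero, one_mul] at hdense
    exact nonempty_of_edgeSet_eq_empty ((Set.ncard_eq_zero (Set.toFinite _)).1 hk)
      (Nat.le_of_mul_le_mul_right (hdense.trans (G.card_interedges_le_mul A A)) hA.card_pos)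
  | succ k ih =>
    obtain ⟨e, he⟩ : H.edgeSet.Nonempty := Set.nonempty_of_ncard_ne_zero (by omega)
    have hW : Nonempty W := ⟨(Quot.out e).1⟩
    have hcard : (H.deleteEdges {e}).edgeSet.ncard = k := by
      rw [edgeSet_deleteEdges, Set.ncard_sdiff_singleton_of_mem he, hk, Nat.add_sub_cancel]
    rw [subdivDensity, hk, pow_succ', mul_assoc 2] at hdense
    obtain ⟨U, hUA, N, hNA, hUN, hU, hNU, hN, hNdense⟩ := exists_connected_dense_neighbors hA
      (Nat.mul_pos (by positivity) Nat.card_pos) hdense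
    obtain ⟨M⟩ := ih hN (by rwa [subdivDensity, hcard]) hcard
    exact M.nonempty_of_deleteEdges (coe_subset.2 hUA) (coe_subset.2 hNA)
      (disjoint_coe.2 hUN) hU.preconnected hNU

end TopMinorModel

lemma card_interedges_lt_of_not_containsSubdivision [Finite W] {G : SimpleGraph V}
    [DecidableRel G.Adj] {H : SimpleGraph W} (h : ¬ ContainsSubdivision H G) {A : Finset V}
    (hA : A.Nonempty) :
    #(G.interedges A A) < subdivDensity H * #A := by
  by_contra! hdense
  obtain ⟨M⟩ := TopMinorModel.nonempty_of_dense hA hdense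
  exact h M.containsSubdivision

/-- The pairs in `D` are joined by pairwise disjoint paths of length two: the path joining the ends
of `e ∈ D`, which lie in `S`, has the middle vertex `m e` outside `S`. -/
structure IsLinkage (G : SimpleGraph V) (S : Finset V) (D : Finset (Sym2 V)) (m : Sym2 V → V) :
    Prop where
  injOn : Set.InjOn m D
  not_isDiag : ∀ e ∈ D, ¬ e.IsDiag
  mem : ∀ e ∈ D, ∀ a ∈ e, a ∈ S
  middle_notMem : ∀ e ∈ D, m e ∉ S
  middle_adj : ∀ e ∈ D, ∀ a ∈ e, G.Adj (m e) a

namespace IsLinkage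

variable {G : SimpleGraph V} {S : Finset V} {D : Finset (Sym2 V)} {m : Sym2 V → V}

lemma insert [DecidableEq V] (hl : IsLinkage G S D m) {w a b : V} (hwS : w ∉ S)
    (hwm : ∀ e ∈ D, m e ≠ w) (ha : a ∈ S) (hb : b ∈ S) (hab : a ≠ b) (hwa : G.Adj w a)
    (hwb : G.Adj w b) (habD : s(a, b) ∉ D) :
    IsLinkage G S (insert s(a, b) D) (update m s(a, b) w) := by
  have hD : ∀ e ∈ D, update m s(a, b) w e = m e := fun e he ↦
    update_of_ne (ne_of_mem_of_not_mem he habD) w m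
  refine ⟨?_, ?_, ?_, ?_, ?_⟩
  · rw [coe_insert, Set.injOn_insert (mem_coe.not.2 habD), update_self]
    refine ⟨hl.injOn.congr fun e he ↦ (hD e he).symm, ?_⟩
    rintro ⟨e, he, hew⟩
    exact hwm e he ((hD e he).symm.trans hew)
  all_goals
    rw [forall_mem_insert]
  · exact ⟨hab, hl.not_isDiag⟩
  · exact ⟨by simp [ha, hb], hl.mem⟩
  · exact ⟨by rwa [update_self], fun e he ↦ hD e he ▸ hl.middle_notMem e he⟩
  · exact ⟨by simp [hwa, hwb], fun e he ↦ hD e he ▸ hl.middle_adj e he⟩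

variable (G S) in
lemma exists_saturated : ∃ D m, IsLinkage G S D m ∧
    ∀ w ∉ S, (∀ e ∈ D, m e ≠ w) → ∀ a ∈ S, ∀ b ∈ S, a ≠ b → G.Adj w a → G.Adj w b →
      s(a, b) ∈ D := by
  classical
  let 𝒟 : Set (Finset (Sym2 V)) := {D | ∃ m, IsLinkage G S D m}
  have hfin : 𝒟.Finite := S.sym2.powerset.finite_toSet.subset fun D ⟨_, hl⟩ ↦
    mem_powerset.2 fun e he ↦ mem_sym2_iff.2 (hl.mem e he)
  have hempty : ∅ ∈ 𝒟 := ⟨fun e ↦ (Quot.out e).1, by constructor <;> simp⟩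
  obtain ⟨D, -, ⟨m, hl⟩, hmax⟩ := hfin.exists_le_maximal hempty
  refine ⟨D, m, hl, fun w hwS hwm a ha b hb hab hwa hwb ↦ ?_⟩
  by_contra habD
  exact habD (hmax ⟨_, hl.insert hwS hwm ha hb hab hwa hwb habD⟩ (subset_insert _ _)
    (mem_insert_self _ _))

lemma card_le [DecidableRel (G ⊔ fromEdgeSet (D : Set (Sym2 V))).Adj] (hl : IsLinkage G S D m) :
    #D ≤ #((G ⊔ fromEdgeSet (D : Set (Sym2 V))).interedges S S) := by
  classical
  suffices D ⊆ ((G ⊔ fromEdgeSet (D : Set (Sym2 V))).interedges S S).image fun p ↦ s(p.1, p.2) from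
    (card_le_card this).trans card_image_le
  intro e he
  induction e with | h a b =>
  refine mem_image.2 ⟨(a, b), (mk_mem_interedges_iff _).2 ⟨hl.mem _ he a (by simp),
    hl.mem _ he b (by simp), .inr ?_⟩, rfl⟩
  exact (fromEdgeSet_adj _).2 ⟨he, hl.not_isDiag _ he⟩

end IsLinkage

namespace TopMinorModel

variable {G : SimpleGraph V} {H : SimpleGraph W} {A : Set V}

/-- The vertices available to the path for `e`, including its ends. -/
def support (M : TopMinorModel H G A) (e : Sym2 W) : Set V := M.inner e ∪ M.branch '' e

lemma exists_branch_eq_of_mem_support (M : TopMinorModel H G A) {e e' : Sym2 W} (he : e ≠ e')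
    {a : V} (ha : a ∈ M.support e) (ha' : a ∈ M.support e') :
    ∃ w, w ∈ e ∧ w ∈ e' ∧ M.branch w = a := by
  rcases ha with ha | ⟨w, hw, rfl⟩ <;> rcases ha' with ha' | ⟨w', hw', hww'⟩
  · exact (Set.disjoint_left.1 (M.disjoint_inner he) ha ha').elim
  · exact (M.branch_notMem_inner e w' (hww' ▸ ha)).elim
  · exact (M.branch_notMem_inner e' w ha').elim
  · exact ⟨w, hw, M.branch.injective hww' ▸ hw', rfl⟩

lemma eq_of_mem_support (M : TopMinorModel H G A) {e e' : Sym2 W} {d : Sym2 V}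
    (hd : ¬ d.IsDiag) (he : ∀ a ∈ d, a ∈ M.support e) (he' : ∀ a ∈ d, a ∈ M.support e') :
    e = e' := by
  by_contra hne
  have hbranch : ∀ a ∈ d, ∃ w, w ∈ e ∧ w ∈ e' ∧ M.branch w = a := fun a ha ↦
    M.exists_branch_eq_of_mem_support hne (he a ha) (he' a ha)
  induction d with | h a b =>
  obtain ⟨x, hx, hx', rfl⟩ := hbranch a (by simp)
  obtain ⟨y, hy, hy', rfl⟩ := hbranch b (by simp)
  have hxy : x ≠ y := fun h ↦ hd (congrArg M.branch h)
  exact hne (Sym2.eq_of_ne_mem hxy hx hy hx' hy')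

lemma nonempty_of_isLinkage {S : Finset V} {D : Finset (Sym2 V)} {m : Sym2 V → V}
    (hl : IsLinkage G S D m) (M : TopMinorModel H (G ⊔ fromEdgeSet (D : Set (Sym2 V))) S) :
    Nonempty (TopMinorModel H G Set.univ) := by
  let middles (e : Sym2 W) : Set V := m '' {d ∈ D | ∀ a ∈ d, a ∈ M.support e}
  have hmiddles : ∀ e, ∀ z ∈ middles e, z ∉ S := by
    rintro e _ ⟨d, ⟨hd, -⟩, rfl⟩
    exact hl.middle_notMem d hd
  have hdisj : ∀ e e', Disjoint (M.inner e) (middles e') := fun e e' ↦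
    Set.disjoint_right.2 fun z hz hz' ↦ hmiddles e' z hz (M.inner_subset e hz')
  refine ⟨{
    branch := M.branch
    inner := fun e ↦ M.inner e ∪ middles e
    branch_mem := fun _ ↦ Set.mem_univ _
    inner_subset := fun _ ↦ Set.subset_univ _
    branch_notMem_inner := fun e w hw ↦ hw.elim (M.branch_notMem_inner e w)
      fun hw ↦ hmiddles e _ hw (M.branch_mem w)
    disjoint_inner := fun e e' hne ↦ ?_
    reachableIn := fun x y hxy ↦ ?_ }⟩
  · refine Set.disjoint_union_left.2 ⟨Set.disjoint_union_right.2 ⟨M.disjoint_inner hne, hdisj e e'⟩,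
      Set.disjoint_union_right.2 ⟨(hdisj e' e).symm, Set.disjoint_left.2 ?_⟩⟩
    rintro _ ⟨d, ⟨hd, hde⟩, rfl⟩ ⟨d', ⟨hd', hde'⟩, hdd'⟩
    obtain rfl := hl.injOn hd' hd hdd'
    exact hne (M.eq_of_mem_support (hl.not_isDiag _ hd) hde hde')
  · have hsub : M.support s(x, y) ⊆ M.inner s(x, y) ∪ middles s(x, y) ∪ M.branch '' s(x, y) :=
      Set.union_subset_union_left _ Set.subset_union_left
    refine (M.reachableIn hxy).lift hsub fun a ha b hb hab ↦ ?_
    rcases hab with hab | hab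
    · exact .of_adj hab (hsub ha) (hsub hb)
    obtain ⟨hD, -⟩ := (fromEdgeSet_adj _).1 hab
    have hmid : m s(a, b) ∈ M.inner s(x, y) ∪ middles s(x, y) ∪ M.branch '' s(x, y) :=
      .inl (.inr ⟨s(a, b), ⟨hD, Sym2.ball.2 ⟨ha, hb⟩⟩, rfl⟩)
    have hadj := hl.middle_adj _ hD
    exact (ReachableIn.of_adj (hadj a (by simp)).symm (hsub ha) hmid).trans
      (.of_adj (hadj b (by simp)) hmid (hsub hb))

end TopMinorModel

/-- Apart from those through `M`, all paths of length one or two from `v` to `T` with inner vertex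
outside `T` end in `D`. -/
def Controls (G : SimpleGraph V) (T : Set V) (v : V) (D M : Finset V) : Prop :=
  (∀ a ∈ T, G.Adj v a → a ∈ D) ∧ ∀ u ∉ T, u ∉ M → G.Adj v u → ∀ a ∈ T, G.Adj u a → a ∈ D

/-- A version of `k`-degeneracy that takes paths of length two into account. The weights `2` and `1`
count the colours that are forbidden in a greedy colouring by the members of `D` and of `M`. -/
def ShallowDegenerate (G : SimpleGraph V) (k : ℕ) : Prop :=
  ∀ S : Finset V, S.Nonempty →
    ∃ v ∈ S, ∃ D M : Finset V, 2 * #D + #M < k ∧ Controls G (S \ {v}) v D M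

lemma card_interedges_le_of_card_le [DecidableEq V] {G : SimpleGraph V} [DecidableRel G.Adj]
    {A B : Finset V} {b d : ℕ} (hG : #(G.interedges (A ∪ B) (A ∪ B)) ≤ d * #(A ∪ B))
    (hB : #B ≤ b * #A) : #(G.interedges A B) ≤ d * (b + 1) * #A := calc
  #(G.interedges A B) ≤ #(G.interedges (A ∪ B) (A ∪ B)) :=
    card_le_card (G.interedges_mono subset_union_left subset_union_right)
  _ ≤ d * #(A ∪ B) := hG
  _ ≤ d * (#A + b * #A) :=
    Nat.mul_le_mul_left d ((card_union_le A B).trans (Nat.add_le_add_left hB _))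
  _ = d * (b + 1) * #A := by ring

lemma shallowDegenerate_of_not_containsSubdivision [Finite W] {G : SimpleGraph V}
    {H : SimpleGraph W} (h : ¬ ContainsSubdivision H G) :
    ShallowDegenerate G (subdivDensity H * (subdivDensity H + 3)) := by
  classical
  intro S hS
  set d := subdivDensity H
  obtain ⟨P, m, hl, hmax⟩ := IsLinkage.exists_saturated G S
  let J := G ⊔ fromEdgeSet (P : Set (Sym2 V))
  have hJ : #(J.interedges S S) < d * #S := by
    by_contra! hdense
    obtain ⟨M⟩ := TopMinorModel.nonempty_of_dense hS hdense
    obtain ⟨M'⟩ := M.nonempty_of_isLinkage hl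
    exact h M'.containsSubdivision
  have hP : #(G.interedges S (P.image m)) ≤ d * (d + 1) * #S :=
    card_interedges_le_of_card_le
      (card_interedges_lt_of_not_containsSubdivision h (hS.mono subset_union_left)).le
      (card_image_le.trans (hl.card_le.trans hJ.le))
  obtain ⟨v, hv, hlt⟩ : ∃ v ∈ S, 2 * #{a ∈ S | J.Adj v a} + #{u ∈ P.image m | G.Adj v u} <
      d * (d + 3) := by
    refine exists_lt_of_sum_lt ?_
    rw [sum_add_distrib, ← mul_sum, ← card_interedges_eq_sum, ← card_interedges_eq_sum, sum_const,
      smul_eq_mul]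
    linarith
  refine ⟨v, hv, _, _, hlt, fun a ha hva ↦ mem_filter.2 ⟨ha.1, .inl hva⟩, ?_⟩
  intro u huT huM hvu a ha hua
  have huS : u ∉ S := fun hu ↦ huT ⟨hu, hvu.ne'⟩
  have hum : ∀ e ∈ P, m e ≠ u := fun e he heu ↦
    huM (mem_filter.2 ⟨mem_image.2 ⟨e, he, heu⟩, hvu⟩)
  exact mem_filter.2 ⟨ha.1, .inr ((fromEdgeSet_adj _).2
    ⟨hmax u huS hum v hv a ha.1 (Ne.symm ha.2) hvu.symm hua, Ne.symm ha.2⟩)⟩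

/-- `φ` is an `L`-colouring that is proper on `S`, and `l u` is a neighbour of `u` whose colour is
unique among the neighbours of `u` in `S`, unless `u` has no neighbours in `S`. -/
structure IsWitnessedColoring {α : Type*} (G : SimpleGraph V) (S : Set V) (L : V → Finset α)
    (φ : V → α) (l : V → V) : Prop where
  mem : ∀ v, φ v ∈ L v
  ne_of_adj : ∀ u ∈ S, ∀ w ∈ S, G.Adj u w → φ u ≠ φ w
  witness : ∀ u, (∃ w ∈ S, G.Adj u w) →
    l u ∈ S ∧ G.Adj u (l u) ∧ ∀ x ∈ S, G.Adj u x → φ x = φ (l u) → x = l u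

section Greedy

variable {α : Type*} {G : SimpleGraph V} {T : Set V} {L : V → Finset α} {φ : V → α} {l : V → V}
  {v : V} {D M : Finset V} {k : ℕ}

lemma Controls.exists_color (hDM : Controls G T v D M)
    (hcard : 2 * #D + #M < #(L v)) (hφ : IsWitnessedColoring G T L φ l) :
    ∃ c ∈ L v, (∀ a ∈ T, G.Adj v a → φ a ≠ c) ∧
      ∀ u, G.Adj v u → (∃ a ∈ T, G.Adj u a) → φ (l u) ≠ c := by
  classical
  let F := D.image φ ∪ D.image (φ ∘ l) ∪ M.image (φ ∘ l)
  have hF : #F < #(L v) := calc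
    #F ≤ #(D.image φ) + #(D.image (φ ∘ l)) + #(M.image (φ ∘ l)) :=
      (card_union_le _ _).trans (Nat.add_le_add_right (card_union_le _ _) _)
    _ ≤ #D + #D + #M := by gcongr <;> exact card_image_le
    _ < #(L v) := by omega
  obtain ⟨c, hc, hcF⟩ := exists_mem_notMem_of_card_lt_card hF
  simp only [F, mem_union, mem_image, comp_apply, not_or, not_exists, not_and] at hcF
  obtain ⟨⟨hφD, hlD⟩, hlM⟩ := hcF
  refine ⟨c, hc, fun a ha hva ↦ hφD a (hDM.1 a ha hva), fun u hvu hu ↦ ?_⟩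
  obtain ⟨hluT, hlu, -⟩ := hφ.witness u hu
  by_cases huT : u ∈ T
  · exact hlD u (hDM.1 u huT hvu)
  by_cases huM : u ∈ M
  · exact hlM u huM
  · exact hφD (l u) (hDM.2 u huT huM hvu _ hluT hlu)

lemma IsWitnessedColoring.insert (hφ : IsWitnessedColoring G T L φ l)
    (hvT : v ∉ T) {c : α} (hc : c ∈ L v) (hcv : ∀ a ∈ T, G.Adj v a → φ a ≠ c)
    (hcl : ∀ u, G.Adj v u → (∃ a ∈ T, G.Adj u a) → φ (l u) ≠ c) :
    ∃ φ' l', IsWitnessedColoring G (insert v T) L φ' l' := by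
  classical
  have hT : ∀ a ∈ T, update φ v c a = φ a := fun a ha ↦
    update_of_ne (ne_of_mem_of_not_mem ha hvT) c φ
  refine ⟨update φ v c, fun u ↦ if ∃ a ∈ T, G.Adj u a then l u else v, fun u ↦ ?_, ?_, ?_⟩
  · obtain rfl | hu := eq_or_ne u v
    · rwa [update_self]
    · rw [update_of_ne hu]; exact hφ.mem u
  · rintro u (rfl | hu) w (rfl | hw) huw
    · exact (huw.ne rfl).elim
    · rw [update_self, hT w hw]
      exact (hcv w hw huw).symm
    · rw [update_self, hT u hu]
      exact hcv u hu huw.symm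
    · rw [hT u hu, hT w hw]
      exact hφ.ne_of_adj u hu w hw huw
  · rintro u ⟨w, hw, huw⟩
    split_ifs with hu
    · obtain ⟨hluT, hlu, huniq⟩ := hφ.witness u hu
      refine ⟨.inr hluT, hlu, ?_⟩
      rintro x (rfl | hx) hux hxl
      · rw [update_self, hT _ hluT] at hxl
        exact (hcl u hux.symm hu hxl.symm).elim
      · rw [hT x hx, hT _ hluT] at hxl
        exact huniq x hx hux hxl
    · have hv : ∀ x ∈ Insert.insert v T, G.Adj u x → x = v := fun x hx hux ↦
        hx.resolve_right fun hx ↦ hu ⟨x, hx, hux⟩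
      exact ⟨.inl rfl, hv w hw huw ▸ huw, fun x hx hux _ ↦ hv x hx hux⟩

lemma ShallowDegenerate.exists_isWitnessedColoring (hG : ShallowDegenerate G k)
    (hL : ∀ v, k ≤ #(L v)) (S : Finset V) : ∃ φ l, IsWitnessedColoring G S L φ l := by
  classical
  induction S using Finset.strongInduction with
  | H S ih =>
  obtain rfl | hS := S.eq_empty_or_nonempty
  · have hL' : ∀ v, (L v).Nonempty := fun v ↦ by
      obtain ⟨_, -, D, M, hcard, -⟩ := hG {v} (singleton_nonempty v)
      exact card_pos.1 (by have := hL v; omega)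
    exact ⟨fun v ↦ (hL' v).choose, id, fun v ↦ (hL' v).choose_spec, by simp, by simp⟩
  obtain ⟨v, hv, D, M, hcard, hDM⟩ := hG S hS
  obtain ⟨φ, l, hφ⟩ := ih (S.erase v) (erase_ssubset hv)
  rw [coe_erase] at hφ
  obtain ⟨c, hc, hcv, hcl⟩ := hDM.exists_color (hcard.trans_le (hL v)) hφ
  have hins := hφ.insert (by simp) hc hcv hcl
  rwa [Set.insert_sdiff_self_of_mem (mem_coe.2 hv)] at hins

end Greedy

lemma ShallowDegenerate.cfChoosable {G : SimpleGraph V} {k : ℕ} (hG : ShallowDegenerate G k)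
    (hfin : ∀ v, (G.neighborSet v).Finite) : CFChoosable G k := by
  classical
  intro L hL
  choose φ l hφ using hG.exists_isWitnessedColoring (L := L) fun v ↦ Nat.cast_le.1 (hL v)
  obtain ⟨χ, hχ⟩ := Finset.rado_selection (β := fun v ↦ L v) fun S v ↦ ⟨φ S v, (hφ S).mem v⟩
  have hχ' : ∀ s : Finset V, ∃ t, s ⊆ t ∧ ∀ x ∈ s, (χ x : ℕ) = φ t x := fun s ↦ by
    obtain ⟨t, hst, ht⟩ := hχ s
    exact ⟨t, hst, fun x hx ↦ congrArg Subtype.val (ht x hx)⟩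
  refine ⟨fun v ↦ χ v, fun v ↦ (χ v).2, fun u w huw ↦ ?_, fun v ⟨w, hvw⟩ ↦ ?_⟩
  · obtain ⟨t, hst, ht⟩ := hχ' {u, w}
    have hne := (hφ t).ne_of_adj u (hst (by simp)) w (hst (by simp)) huw
    rwa [← ht u (by simp), ← ht w (by simp)] at hne
  · have hmem : ∀ x, x ∈ (hfin v).toFinset ↔ G.Adj v x := fun x ↦ by simp
    obtain ⟨t, hst, ht⟩ := hχ' (hfin v).toFinset
    obtain ⟨-, hadj, huniq⟩ := (hφ t).witness v ⟨w, hst ((hmem w).2 hvw), hvw⟩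
    refine ⟨φ t (l t v), Set.ncard_eq_one.2 ⟨l t v, Set.ext fun x ↦ ⟨?_, ?_⟩⟩⟩
    · rintro ⟨hvx, hx⟩
      exact huniq x (hst ((hmem x).2 hvx)) hvx ((ht x ((hmem x).2 hvx)).symm.trans hx)
    · rintro rfl
      exact ⟨hadj, ht _ ((hmem _).2 hadj)⟩

theorem stmt0_general {W : Type v} [Finite W] (H : SimpleGraph W) :
    ∃ c : ℝ, ∀ (V : Type u) (G : SimpleGraph V), (∀ v, (G.neighborSet v).Finite) →
      ¬ ContainsSubdivision H G → CFChoosable G c :=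
  ⟨_, fun _ _ hfin h ↦ (shallowDegenerate_of_not_containsSubdivision h).cfChoosable hfin⟩

theorem stmt0 (WH : Type) [Fintype WH] (H : SimpleGraph WH) :
    ∃ c : ℝ, ∀ (V : Type) [Fintype V] (G : SimpleGraph V),
      ¬ ContainsSubdivision H G → CFChoosable G c := by
  obtain ⟨c, hc⟩ := stmt0_general H
  exact ⟨c, fun V _ G ↦ hc V G fun v ↦ Set.toFinite (G.neighborSet v)⟩

end CFPaper
end

section
/- Let d be a nonnegative integer and let F be a d-degenerate minor-closed family of finite simple graphs. Then every graph G in F is conflict-free (2d+1)-choosable. -/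
/-
Remove a vertex `v` of degree at most `d`, color the rest by induction, and give `v` a color
avoiding at most `2d` values: for each neighbor of `v`, its own color and one color that it needs to
keep unique in its neighborhood. The difficulty is `v` itself, which needs a neighbor `w` whose
color is unique around `v`. Contracting `vw` onto `w`, rather than deleting `v`, makes `w` adjacent
to all the other neighbors of `v`, so a proper coloring of the contraction provides this. The
contraction adds edges at `w` which must not count for conflict-freeness, hence the induction is on
pairs `H ≤ G`, with colorings proper for `G` and conflict-free for `H`.
-/

open SimpleGraph

universe u v

namespace CFPaper

variable {V : Type u} {W : Type v}

theorem exists_mem_forall_ne_and_ne {α β : Type*} {s : Set α} (hs : s.Finite) (f g : α → β)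
    {t : Finset β} (hst : 2 * s.ncard < t.card) : ∃ c ∈ t, ∀ a ∈ s, f a ≠ c ∧ g a ≠ c := by
  have hcard : (f '' s ∪ g '' s).ncard < (t : Set β).ncard := by
    calc (f '' s ∪ g '' s).ncard
        ≤ (f '' s).ncard + (g '' s).ncard := Set.ncard_union_le _ _
      _ ≤ s.ncard + s.ncard := add_le_add (Set.ncard_image_le hs) (Set.ncard_image_le hs)
      _ < (t : Set β).ncard := by rw [Set.ncard_coe_finset]; omega
  obtain ⟨c, hct, hc⟩ :=
    Set.exists_mem_notMem_of_ncard_lt_ncard hcard ((hs.image f).union (hs.image g))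
  exact ⟨c, hct, fun a ha => ⟨fun h => hc (.inl ⟨a, ha, h⟩), fun h => hc (.inr ⟨a, ha, h⟩)⟩⟩

section UniqueColor

variable {κ : Type*}

/-- `y` is a neighbor of `x` whose color appears exactly once in the neighborhood of `x`, thus a
witness that `φ` is conflict-free at `x`. -/
def IsUniqueColorNeighbor (G : SimpleGraph V) (φ : V → κ) (x y : V) : Prop :=
  G.Adj x y ∧ ∀ ⦃z⦄, G.Adj x z → φ z = φ y → z = y

theorem conflictFree_iff {G : SimpleGraph V} {φ : V → ℕ} :
    ConflictFree G φ ↔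
      ∀ x, (G.neighborSet x).Nonempty → ∃ y, IsUniqueColorNeighbor G φ x y := by
  refine forall₂_congr fun x _ => ?_
  simp only [Set.ncard_eq_one, Set.eq_singleton_iff_unique_mem, Set.mem_ofPred_eq]
  constructor
  · rintro ⟨c, y, ⟨hxy, rfl⟩, huniq⟩
    exact ⟨y, hxy, fun z hxz hz => huniq z ⟨hxz, hz⟩⟩
  · rintro ⟨y, hxy, huniq⟩
    exact ⟨φ y, y, ⟨hxy, rfl⟩, fun z hz => huniq hz.1 hz.2⟩

variable [DecidableEq V] {G : SimpleGraph V} {φ : V → κ} {v : V} {c : κ}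

theorem IsUniqueColorNeighbor.update_self {y : V} (h : IsUniqueColorNeighbor G φ v y) :
    IsUniqueColorNeighbor G (Function.update φ v c) v y := by
  refine ⟨h.1, fun z hvz hz => h.2 hvz ?_⟩
  rwa [Function.update_of_ne hvz.ne', Function.update_of_ne h.1.ne'] at hz

theorem IsUniqueColorNeighbor.update_of_induce_compl {x y : ({v}ᶜ : Set V)}
    (h : IsUniqueColorNeighbor (G.induce {v}ᶜ) (φ ∘ (↑)) x y) (hc : G.Adj v x → φ y ≠ c) :
    IsUniqueColorNeighbor G (Function.update φ v c) x y := by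
  refine ⟨h.1, fun z hxz hz => ?_⟩
  rw [Function.update_of_ne y.2] at hz
  obtain rfl | hzv := eq_or_ne z v
  · rw [Function.update_self] at hz
    exact absurd hz.symm (hc hxz.symm)
  · rw [Function.update_of_ne hzv] at hz
    exact congrArg Subtype.val (h.2 (z := ⟨z, hzv⟩) hxz hz)

end UniqueColor

section Extension

variable [DecidableEq V] {G H : SimpleGraph V} {φ : V → ℕ} {v : V}

theorem Proper.update_of_induce_compl {c : ℕ} (h : Proper (G.induce {v}ᶜ) (φ ∘ (↑)))
    (hc : ∀ u, G.Adj v u → φ u ≠ c) : Proper G (Function.update φ v c) := by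
  intro x y hxy
  obtain rfl | hxv := eq_or_ne x v
  · rw [Function.update_self, Function.update_of_ne hxy.ne']
    exact (hc y hxy).symm
  obtain rfl | hyv := eq_or_ne y v
  · rw [Function.update_self, Function.update_of_ne hxv]
    exact hc x hxy.symm
  · rw [Function.update_of_ne hxv, Function.update_of_ne hyv]
    exact h (u := ⟨x, hxv⟩) (w := ⟨y, hyv⟩) hxy

theorem ConflictFree.exists_forbidden_color (h : ConflictFree (H.induce {v}ᶜ) (φ ∘ (↑)))
    (hv : (H.neighborSet v).Nonempty → ∃ w, IsUniqueColorNeighbor H φ v w) (x : V) :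
    ∃ k, ∀ c, (H.Adj v x → k ≠ c) → (H.neighborSet x).Nonempty →
      ∃ y, IsUniqueColorNeighbor H (Function.update φ v c) x y := by
  obtain rfl | hxv := eq_or_ne x v
  · exact ⟨0, fun c _ hx => (hv hx).imp fun _ hw => hw.update_self⟩
  by_cases hx' : ((H.induce {v}ᶜ).neighborSet ⟨x, hxv⟩).Nonempty
  · obtain ⟨y, hy⟩ := conflictFree_iff.1 h _ hx'
    exact ⟨φ y, fun c hc _ => ⟨y, hy.update_of_induce_compl hc⟩⟩
  · have eq_of_adj : ∀ z, H.Adj x z → z = v := fun z hxz =>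
      by_contra fun hzv => hx' ⟨⟨z, hzv⟩, hxz⟩
    exact ⟨0, fun c _ ⟨y, hxy⟩ =>
      ⟨y, hxy, fun z hxz _ => (eq_of_adj z hxz).trans (eq_of_adj y hxy).symm⟩⟩

theorem exists_update_proper_conflictFree (hHG : H ≤ G) (hfin : (G.neighborSet v).Finite)
    {L : Finset ℕ} (hL : 2 * (G.neighborSet v).ncard < L.card)
    (hG : Proper (G.induce {v}ᶜ) (φ ∘ (↑))) (hH : ConflictFree (H.induce {v}ᶜ) (φ ∘ (↑)))
    (hv : (H.neighborSet v).Nonempty → ∃ w, IsUniqueColorNeighbor H φ v w) :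
    ∃ c ∈ L, Proper G (Function.update φ v c) ∧ ConflictFree H (Function.update φ v c) := by
  choose k hk using hH.exists_forbidden_color hv
  obtain ⟨c, hcL, hc⟩ := exists_mem_forall_ne_and_ne hfin φ k hL
  exact ⟨c, hcL, hG.update_of_induce_compl fun u hvu => (hc u hvu).1,
    conflictFree_iff.2 fun x => hk x c fun hvx => (hc x (hHG hvx)).2⟩

end Extension

theorem isMinor_induce_map {G : SimpleGraph V} {f : V → W} {s : Set W}
    (hf : ∀ x ∈ s, (G.induce (f ⁻¹' {x})).Connected) : IsMinor ((G.map f).induce s) G := by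
  refine ⟨fun x => f ⁻¹' {(x : W)}, fun x => hf x x.2, fun x y hxy => ?_, ?_⟩
  · exact (Set.disjoint_singleton.2 (Subtype.coe_ne_coe.2 hxy)).preimage f
  · rintro x y ⟨-, a, b, hab, ha, hb⟩
    exact ⟨a, ha, b, hb, hab⟩

section Contraction

variable [DecidableEq V] {G : SimpleGraph V} {v w : V}

/-- The contraction of the edge `vw` of `G` onto its end `w`, on the vertex set `{v}ᶜ`. The value
`w = v` is allowed and stands for the deletion of `v`. -/
def contractOnto (G : SimpleGraph V) (v w : V) : SimpleGraph ({v}ᶜ : Set V) :=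
  (G.map (Function.update id v w)).induce {v}ᶜ

theorem induce_compl_le_contractOnto : G.induce {v}ᶜ ≤ contractOnto G v w := fun x y hxy =>
  ⟨Subtype.coe_ne_coe.2 hxy.ne, x, y, hxy, Function.update_of_ne x.2 _ _,
    Function.update_of_ne y.2 _ _⟩

theorem contractOnto_adj_of_adj {z : V} (hw : w ≠ v) (hvz : G.Adj v z) (hzw : z ≠ w) :
    (contractOnto G v w).Adj ⟨z, hvz.ne'⟩ ⟨w, hw⟩ :=
  ⟨hzw, z, v, hvz.symm, Function.update_of_ne hvz.ne' _ _, Function.update_self ..⟩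

theorem isMinor_contractOnto (hvw : w = v ∨ G.Adj v w) : IsMinor (contractOnto G v w) G := by
  refine isMinor_induce_map fun x (hxv : x ≠ v) => ?_
  by_cases hx : x = w
  · have fiber_eq : Function.update id v w ⁻¹' {x} = {v, x} := by
      ext z; by_cases hz : z = v <;> simp [hz, hx]
    rw [fiber_eq]
    exact induce_pair_connected_of_adj (hx ▸ hvw.resolve_left (hx ▸ hxv))
  · have fiber_eq : Function.update id v w ⁻¹' {x} = {x} := by
      ext z; by_cases hz : z = v <;> simp [hz, Ne.symm hx, hxv.symm]
    rw [fiber_eq]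
    exact Connected.of_subsingleton

theorem Proper.isUniqueColorNeighbor_of_contractOnto {H : SimpleGraph V} (hHG : H ≤ G)
    {φ : V → ℕ} (h : Proper (contractOnto G v w) (φ ∘ (↑))) (hvw : H.Adj v w) :
    IsUniqueColorNeighbor H φ v w :=
  ⟨hvw, fun _ hvz hzw => by_contra fun hne =>
    h (contractOnto_adj_of_adj hvw.ne' (hHG hvz) hne) hzw⟩

end Contraction

theorem stmt1_general {d : ℕ} {F : ∀ (α : Type u) [Finite α], SimpleGraph α → Prop}
    (hdeg : ∀ (α : Type u) [Finite α] [Nonempty α] (G : SimpleGraph α), F α G →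
      ∃ v, (G.neighborSet v).ncard ≤ d)
    (hmc : ∀ (α β : Type u) [Finite α] [Finite β] (G : SimpleGraph α) (H : SimpleGraph β),
      F α G → IsMinor H G → F β H)
    {V : Type u} [Finite V] {G H : SimpleGraph V} (hG : F V G) (hHG : H ≤ G)
    {L : V → Finset ℕ} (hL : ∀ v, 2 * d + 1 ≤ (L v).card) :
    ∃ φ : V → ℕ, (∀ v, φ v ∈ L v) ∧ Proper G φ ∧ ConflictFree H φ := by
  classical
  induction hn : Nat.card V using Nat.strong_induction_on generalizing V with | _ n ih
  obtain hV | hV := isEmpty_or_nonempty V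
  · exact ⟨fun _ => 0, hV.elim, fun x => hV.elim x, hV.elim⟩
  obtain ⟨v, hv⟩ := hdeg V G hG
  obtain ⟨w, hvw, hw⟩ : ∃ w, (w = v ∨ G.Adj v w) ∧ ((H.neighborSet v).Nonempty → H.Adj v w) := by
    by_cases h : (H.neighborSet v).Nonempty
    · exact h.imp fun w hw => ⟨.inr (hHG hw), fun _ => hw⟩
    · exact ⟨v, .inl rfl, fun h' => absurd h' h⟩
  have hcard : Nat.card ({v}ᶜ : Set V) < n := hn ▸ Finite.card_subtype_lt (not_not.2 rfl)
  obtain ⟨φ', hφL, hφG, hφH⟩ := ih _ hcard (hmc _ _ G _ hG (isMinor_contractOnto hvw))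
    ((comap_monotone _ hHG).trans induce_compl_le_contractOnto) (fun x => hL x) rfl
  obtain ⟨φ, rfl⟩ := Subtype.coe_injective.surjective_comp_right φ'
  obtain ⟨c, hcL, hc⟩ := exists_update_proper_conflictFree hHG (Set.toFinite _)
    (L := L v) (by have := hL v; omega) (fun _ _ h => hφG (induce_compl_le_contractOnto h)) hφH
    fun h => ⟨w, hφG.isUniqueColorNeighbor_of_contractOnto hHG (hw h)⟩
  refine ⟨Function.update φ v c, fun x => ?_, hc⟩
  obtain rfl | hx := eq_or_ne x v
  · rwa [Function.update_self]
  · rw [Function.update_of_ne hx]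
    exact hφL ⟨x, hx⟩

theorem stmt1 (d : ℕ)
    (F : ∀ (α : Type) [Finite α], SimpleGraph α → Prop)
    (hdeg : ∀ (α : Type) [Finite α] (G : SimpleGraph α), F α G →
      ∀ K : G.Subgraph, K.verts.Nonempty → ∃ v ∈ K.verts, (K.neighborSet v).ncard ≤ d)
    (hmc : ∀ (α β : Type) [Finite α] [Finite β] (G : SimpleGraph α) (H : SimpleGraph β),
      F α G → IsMinor H G → F β H)
    (V : Type) [Fintype V] (G : SimpleGraph V) (hG : F V G) :
    CFChoosable G ((2 * d + 1 : ℕ) : ℝ) := by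
  have hmin (α : Type) [Finite α] [hα : Nonempty α] (G : SimpleGraph α) (hG : F α G) :
      ∃ v, (G.neighborSet v).ncard ≤ d :=
    (hdeg α G hG ⊤ Set.univ_nonempty).imp fun _ h => h.2
  exact fun L hL => stmt1_general hmin hmc hG le_rfl fun v => mod_cast hL v

end CFPaper
end

section
/- Let w be a positive integer. Every finite simple graph with layered treewidth at most w is conflict-free (8w−1)-choosable. -/
open SimpleGraph

universe u v

namespace CFPaper

variable {V : Type u} {W : Type v}

/-!
Root the tree of the tree-decomposition and order the vertices by the depths of the topmost nodes
`t v` of their subtrees. If `u` precedes `v` and shares a bag with it, then `u` is in the bag at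
`t v`. Color greedily along this order, so that `v` avoids the colors of its earlier neighbors and
of the earlier vertices that are the least neighbor of some neighbor of `v`; then the color of the
least neighbor of `u` is unique in the neighborhood of `u`.

All earlier neighbors of `v` are in the bag at `t v`, within distance one of the layer of `v`, so
there are at most `3w - 1` of them, and they have at most as many least neighbors. If a neighbor `u`
comes after `v` instead, its least neighbor shares the bag at `t u` with `v`, hence is in the bag at
`t v`, within distance two of the layer of `v`. So `v` avoids at most `(3w - 1) + (5w - 1) = 8w - 2`
colors.
-/

section Coloring

theorem exists_forall_mem_of_encard_lt {α : Type*} [LT V] [WellFoundedLT V]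
    {D : V → Set V} {L : V → Finset α} (hD : ∀ v, ∀ u ∈ D v, u < v)
    (hL : ∀ v, (D v).encard < (L v).card) :
    ∃ φ : V → α, ∀ v, φ v ∈ L v ∧ ∀ u ∈ D v, φ u ≠ φ v := by
  have exists_unused (v : V) (ψ : ∀ u, u < v → α) :
      ∃ c ∈ L v, ∀ u (hu : u ∈ D v), ψ u (hD v u hu) ≠ c := by
    by_contra! hused
    have hsub : (L v : Set α) ⊆ Set.range fun u : D v => ψ u (hD v u u.2) := fun c hc =>
      let ⟨u, hu, huc⟩ := hused c hc
      ⟨⟨u, hu⟩, huc⟩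
    refine (hL v).not_ge ?_
    calc ((L v).card : ℕ∞) = (L v : Set α).encard := (Set.encard_coe_eq_coe_finsetCard _).symm
      _ ≤ (Set.range fun u : D v => ψ u (hD v u u.2)).encard := Set.encard_le_encard hsub
      _ ≤ (D v).encard := by
        rw [← Set.image_univ, ← ENat.card_coe_set_eq (D v), ← Set.encard_univ]
        exact Set.encard_image_le _ _
  choose c c_mem c_ne using exists_unused
  refine ⟨wellFounded_lt.fix c, fun v => ?_⟩
  rw [wellFounded_lt.fix_eq c v]
  exact ⟨c_mem v _, c_ne v fun u _ => wellFounded_lt.fix c u⟩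

variable [LinearOrder V] [WellFoundedLT V] {G : SimpleGraph V} {φ : V → ℕ}

open Classical in
/-- The least neighbor of `u` in a well-ordered vertex set, whose color is to be unique in the
neighborhood of `u`; an isolated vertex is sent to itself. -/
noncomputable def leastNeighbor (G : SimpleGraph V) (u : V) : V :=
  if hu : (G.neighborSet u).Nonempty then wellFounded_lt.min (G.neighborSet u) hu else u

theorem isLeast_leastNeighbor {u : V} (hu : (G.neighborSet u).Nonempty) :
    IsLeast (G.neighborSet u) (leastNeighbor G u) := by
  rw [leastNeighbor, dif_pos hu]
  exact ⟨wellFounded_lt.min_mem _ hu, fun _ hv => wellFounded_lt.min_le hv⟩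

/-- The vertices whose colors `v` has to avoid when a proper conflict-free coloring is built
greedily along the order: the neighbors of `v` and the least neighbors of the neighbors of `v`, as
far as they precede `v`. -/
def conflictSet (G : SimpleGraph V) (v : V) : Set V :=
  (G.neighborSet v ∪ leastNeighbor G '' G.neighborSet v) ∩ Set.Iio v

theorem proper_of_forall_conflictSet (hφ : ∀ v, ∀ u ∈ conflictSet G v, φ u ≠ φ v) :
    Proper G φ := by
  intro u v huv
  rcases huv.ne.lt_or_gt with hlt | hgt
  · exact hφ v u ⟨Or.inl huv.symm, hlt⟩
  · exact (hφ u v ⟨Or.inl huv, hgt⟩).symm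

theorem conflictFree_of_forall_conflictSet (hφ : ∀ v, ∀ u ∈ conflictSet G v, φ u ≠ φ v) :
    ConflictFree G φ := by
  intro u hu
  obtain ⟨hadj, hle⟩ := isLeast_leastNeighbor hu
  refine ⟨φ (leastNeighbor G u), Set.ncard_eq_one.2 ⟨leastNeighbor G u, ?_⟩⟩
  refine Set.eq_singleton_iff_unique_mem.2 ⟨⟨hadj, rfl⟩, ?_⟩
  rintro v ⟨huv, hcolor⟩
  by_contra hne
  have hlt : leastNeighbor G u < v := (hle huv).lt_of_ne' hne
  exact hφ v _ ⟨Or.inr ⟨u, huv.symm, rfl⟩, hlt⟩ hcolor.symm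

theorem exists_proper_conflictFree_of_encard_conflictSet_lt {L : V → Finset ℕ}
    (hL : ∀ v, (conflictSet G v).encard < (L v).card) :
    ∃ φ : V → ℕ, (∀ v, φ v ∈ L v) ∧ Proper G φ ∧ ConflictFree G φ := by
  obtain ⟨φ, hφ⟩ := exists_forall_mem_of_encard_lt (fun _ _ hu => hu.2) hL
  exact ⟨φ, fun v => (hφ v).1, proper_of_forall_conflictSet fun v => (hφ v).2,
    conflictFree_of_forall_conflictSet fun v => (hφ v).2⟩

end Coloring

section Tree

variable {ι : Type*} {T : SimpleGraph ι}

theorem eq_of_mem_support_of_dist_le {ρ x y : ι} {p : T.Walk ρ x} (hp : p.length = T.dist ρ x)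
    (hy : y ∈ p.support) (hxy : T.dist ρ x ≤ T.dist ρ y) : y = x := by
  classical
  have hsplit : (p.takeUntil y hy).length + (p.dropUntil y hy).length = p.length := by
    rw [← Walk.length_append, p.take_spec hy]
  have htake : T.dist ρ y ≤ (p.takeUntil y hy).length := dist_le _
  exact Walk.eq_of_length_eq_zero (p := p.dropUntil y hy) (by omega)

theorem isPath_append_of_forall_dist_le {ρ x z : ι} {p : T.Walk ρ x} {q : T.Walk x z}
    (hp : p.length = T.dist ρ x) (hq : q.IsPath)
    (hmin : ∀ y ∈ q.support, T.dist ρ x ≤ T.dist ρ y) : (p.append q).IsPath := by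
  rw [Walk.isPath_def, Walk.support_append, List.nodup_append]
  refine ⟨(p.isPath_of_length_eq_dist hp).support_nodup, hq.support_nodup.tail, ?_⟩
  rintro y hyp _ hyq rfl
  obtain rfl := eq_of_mem_support_of_dist_le hp hyp (hmin y (List.mem_of_mem_tail hyq))
  have hnodup := hq.support_nodup
  rw [← Walk.cons_tail_support] at hnodup
  exact (List.nodup_cons.1 hnodup).1 hyq

theorem exists_isPath_forall_mem_of_induce_preconnected {S : Set ι}
    (hS : (T.induce S).Preconnected) {x z : ι} (hx : x ∈ S) (hz : z ∈ S) :
    ∃ q : T.Walk x z, q.IsPath ∧ ∀ y ∈ q.support, y ∈ S := by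
  obtain ⟨q, hq⟩ := (hS ⟨x, hx⟩ ⟨z, hz⟩).exists_isPath
  let f : T.induce S →g T := (Embedding.induce S).toHom
  refine ⟨q.map f, hq.map Subtype.val_injective, fun y hy => ?_⟩
  obtain ⟨a, -, rfl⟩ := List.mem_map.1 (q.support_map f ▸ hy)
  exact a.2

theorem mem_of_isMinOn_dist_of_inter_nonempty (hT : T.IsTree) {ρ x x' : ι} {S S' : Set ι}
    (hS : (T.induce S).Preconnected) (hS' : (T.induce S').Preconnected) (hx : x ∈ S)
    (hx' : x' ∈ S') (hmin : IsMinOn (T.dist ρ) S x) (hmin' : IsMinOn (T.dist ρ) S' x')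
    (hxx' : T.dist ρ x ≤ T.dist ρ x') (hSS' : (S ∩ S').Nonempty) : x' ∈ S := by
  obtain ⟨z, hz, hz'⟩ := hSS'
  obtain ⟨p, hp⟩ := hT.connected.exists_walk_length_eq_dist ρ x
  obtain ⟨p', hp'⟩ := hT.connected.exists_walk_length_eq_dist ρ x'
  obtain ⟨q, hq, hqS⟩ := exists_isPath_forall_mem_of_induce_preconnected hS hx hz
  obtain ⟨q', hq', hqS'⟩ := exists_isPath_forall_mem_of_induce_preconnected hS' hx' hz'
  have hpq : (p.append q).IsPath :=
    isPath_append_of_forall_dist_le hp hq fun y hy => hmin (hqS y hy)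
  have hpq' : (p'.append q').IsPath :=
    isPath_append_of_forall_dist_le hp' hq' fun y hy => hmin' (hqS' y hy)
  have heq : p.append q = p'.append q' :=
    congrArg Subtype.val ((hT.isAcyclic.subsingleton_path ρ z).elim ⟨_, hpq⟩ ⟨_, hpq'⟩)
  -- Both `x` and `x'` lie on the unique path from `ρ` to `z`, and this path stays in `S` after `x`.
  have hmem : x' ∈ (p.append q).support := by
    rw [heq, Walk.mem_support_append_iff]
    exact Or.inl p'.end_mem_support
  rcases (Walk.mem_support_append_iff p q).1 hmem with hmem | hmem
  · rwa [eq_of_mem_support_of_dist_le hp hmem hxx']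
  · exact hqS x' hmem

end Tree

section TopNode

theorem exists_wellFoundedLT_monotone {α : Type*} [LinearOrder α] [WellFoundedLT α] (f : V → α) :
    ∃ (_ : LinearOrder V) (_ : WellFoundedLT V), Monotone f := by
  classical
  have : IsWellFounded V (InvImage (· < ·) f) := ⟨InvImage.wf f wellFounded_lt⟩
  obtain ⟨s, hs, _⟩ := IsWellFounded.exists_well_order_ge (InvImage (· < ·) f)
  let : LinearOrder V := linearOrderOfSTO s
  refine ⟨inferInstance, ⟨IsWellFounded.wf (r := s)⟩, fun u v huv => ?_⟩
  by_contra! hlt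
  exact huv.not_gt (hs v u hlt)

variable {ι : Type*} {B : ι → Set V} {t : V → ι}

/-- `t v` plays the role of the top node of `v` in a rooted tree-decomposition with bags `B`, for
vertices ordered by the depths of their top nodes. Only the consequence that the coloring argument
needs is recorded: whoever precedes `v` in some bag containing `v` also lies in the bag at `t v`. -/
structure IsTopNode [LE V] (B : ι → Set V) (t : V → ι) : Prop where
  mem : ∀ v, v ∈ B (t v)
  mem_of_le : ∀ ⦃u v : V⦄ ⦃z : ι⦄, u ∈ B z → v ∈ B z → u ≤ v → u ∈ B (t v)

variable {G : SimpleGraph V} {T : SimpleGraph ι}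

theorem IsTreeDecomp.exists_isTopNode (h : IsTreeDecomp G T B) :
    ∃ (_ : LinearOrder V) (_ : WellFoundedLT V) (t : V → ι), IsTopNode B t := by
  obtain ⟨ρ⟩ := h.tree.connected.nonempty
  have exists_root (v : V) : ∃ x, v ∈ B x ∧ IsMinOn (T.dist ρ) {y | v ∈ B y} x := by
    obtain ⟨x⟩ := (h.bags_connected v).nonempty
    have hne : {y | v ∈ B y}.Nonempty := ⟨x, x.2⟩
    exact ⟨_, Function.argminOn_mem (T.dist ρ) _ hne,
      fun _ hy => Function.argminOn_le (T.dist ρ) _ hy⟩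
  choose t ht hmin using exists_root
  obtain ⟨_, hwf, hmono⟩ := exists_wellFoundedLT_monotone fun v => T.dist ρ (t v)
  refine ⟨inferInstance, hwf, t, ht, fun u v z hu hv huv => ?_⟩
  exact mem_of_isMinOn_dist_of_inter_nonempty h.tree (h.bags_connected u).preconnected
    (h.bags_connected v).preconnected (ht u) (ht v) (hmin u) (hmin v) (hmono huv) ⟨z, hu, hv⟩

theorem IsTopNode.mem_of_adj [LE V] (ht : IsTopNode B t) (h : IsTreeDecomp G T B) {u v : V}
    (huv : G.Adj u v) (hle : u ≤ v) : u ∈ B (t v) :=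
  let ⟨_, hu, hv⟩ := h.edge_in_bag huv
  ht.mem_of_le hu hv hle

end TopNode

section Layering

variable {ι : Type*} {G : SimpleGraph V} {T : SimpleGraph ι} {B : ι → Set V} {t : V → ι}
  {l : V → ℕ}

theorem IsLayering.exists_layer {Vl : ℕ → Set V} (h : IsLayering G Vl) :
    ∃ l : V → ℕ, (∀ i, Vl i = l ⁻¹' {i}) ∧ ∀ ⦃u v⦄, G.Adj u v → l u ≤ l v + 1 := by
  obtain ⟨hcover, hdisj, hadj⟩ := h
  choose l hl using hcover
  have hlayer (i : ℕ) : Vl i = l ⁻¹' {i} := by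
    ext v
    refine ⟨fun hv => ?_, fun hv => hv ▸ hl v⟩
    by_contra hne
    exact Set.disjoint_left.1 (hdisj hne) (hl v) hv
  refine ⟨l, hlayer, fun u v huv => ?_⟩
  obtain ⟨i, hu, hv⟩ := hadj huv
  simp only [hlayer, Set.mem_union, Set.mem_preimage, Set.mem_singleton_iff] at hu hv
  omega

/-- The vertices of `X` whose layer, given by `l`, differs from `n` by at most `d`. The truncation
of `n - d` is harmless since layers are indexed by natural numbers. -/
def layerWindow (l : V → ℕ) (X : Set V) (n d : ℕ) : Set V :=
  l ⁻¹' Set.Icc (n - d) (n + d) ∩ X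

theorem mem_layerWindow {X : Set V} {n d : ℕ} {v : V} :
    v ∈ layerWindow l X n d ↔ (n ≤ l v + d ∧ l v ≤ n + d) ∧ v ∈ X := by
  simp only [layerWindow, Set.mem_inter_iff, Set.mem_preimage, Set.mem_Icc, tsub_le_iff_right]

theorem encard_layerWindow_le {X : Set V} {w : ℕ} (hw : ∀ i, (l ⁻¹' {i} ∩ X).encard ≤ w)
    (n d : ℕ) : (layerWindow l X n d).encard ≤ (2 * d + 1) * w := by
  have hcover : layerWindow l X n d = ⋃ i ∈ Finset.Icc (n - d) (n + d), l ⁻¹' {i} ∩ X := by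
    ext v
    simp [layerWindow]
  have hcard : (Finset.Icc (n - d) (n + d)).card ≤ 2 * d + 1 := by
    rw [Nat.card_Icc]
    omega
  calc (layerWindow l X n d).encard
      ≤ ∑ i ∈ Finset.Icc (n - d) (n + d), (l ⁻¹' {i} ∩ X).encard := by
        rw [hcover]
        exact Finset.set_encard_biUnion_le _ _
    _ ≤ (Finset.Icc (n - d) (n + d)).card • (w : ℕ∞) :=
        Finset.sum_le_card_nsmul _ _ _ fun i _ => hw i
    _ ≤ (2 * d + 1) * w := by
        rw [nsmul_eq_mul]
        gcongr
        exact_mod_cast hcard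

theorem IsTopNode.neighborSet_inter_Iio_subset [Preorder V] (ht : IsTopNode B t)
    (h : IsTreeDecomp G T B) (hl : ∀ ⦃u v⦄, G.Adj u v → l u ≤ l v + 1) (v : V) :
    G.neighborSet v ∩ Set.Iio v ⊆ layerWindow l (B (t v)) (l v) 1 \ {v} := fun u hu =>
  have huv : G.Adj v u := hu.1
  ⟨mem_layerWindow.2 ⟨⟨hl huv, hl huv.symm⟩, ht.mem_of_adj h huv.symm (le_of_lt hu.2)⟩, huv.ne'⟩

variable [LinearOrder V] [WellFoundedLT V]

theorem IsTopNode.conflictSet_subset (ht : IsTopNode B t) (h : IsTreeDecomp G T B)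
    (hl : ∀ ⦃u v⦄, G.Adj u v → l u ≤ l v + 1) (v : V) :
    conflictSet G v ⊆ leastNeighbor G '' (G.neighborSet v ∩ Set.Iio v) ∪
      layerWindow l (B (t v)) (l v) 2 \ {v} := by
  rintro y ⟨hvy | ⟨u, hvu, rfl⟩, hyv⟩
  · have hy := ht.neighborSet_inter_Iio_subset h hl v ⟨hvy, hyv⟩
    rw [Set.mem_sdiff, mem_layerWindow] at hy
    exact Or.inr ⟨mem_layerWindow.2 ⟨by omega, hy.1.2⟩, hy.2⟩
  · rcases lt_or_ge u v with huv | hvu_le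
    · exact Or.inl ⟨u, ⟨hvu, huv⟩, rfl⟩
    · rw [mem_neighborSet] at hvu
      obtain ⟨huy, -⟩ := isLeast_leastNeighbor ⟨v, hvu.symm⟩
      rw [mem_neighborSet] at huy
      -- Both `v` and the least neighbor precede `u`, so they share the bag at `t u`.
      have hv_mem : v ∈ B (t u) := ht.mem_of_adj h hvu hvu_le
      have hy_mem : leastNeighbor G u ∈ B (t u) :=
        ht.mem_of_adj h huy.symm (hyv.le.trans hvu_le)
      have hvu_layer := And.intro (hl hvu) (hl hvu.symm)
      have huy_layer := And.intro (hl huy) (hl huy.symm)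
      exact Or.inr ⟨mem_layerWindow.2 ⟨by omega, ht.mem_of_le hy_mem hv_mem hyv.le⟩, hyv.ne⟩

theorem IsTopNode.encard_conflictSet_add_two_le (ht : IsTopNode B t) (h : IsTreeDecomp G T B)
    (hl : ∀ ⦃u v⦄, G.Adj u v → l u ≤ l v + 1) {w : ℕ}
    (hw : ∀ i x, (l ⁻¹' {i} ∩ B x).encard ≤ w) (v : V) :
    (conflictSet G v).encard + 2 ≤ 8 * w := by
  have mem_window (d : ℕ) : v ∈ layerWindow l (B (t v)) (l v) d :=
    mem_layerWindow.2 ⟨by omega, ht.mem v⟩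
  have window_le (d : ℕ) : (layerWindow l (B (t v)) (l v) d).encard ≤ (2 * d + 1) * w :=
    encard_layerWindow_le (fun i => hw i (t v)) _ _
  calc (conflictSet G v).encard + 2
      ≤ (leastNeighbor G '' (G.neighborSet v ∩ Set.Iio v) ∪
          layerWindow l (B (t v)) (l v) 2 \ {v}).encard + 2 := by
        gcongr
        exact ht.conflictSet_subset h hl v
    _ ≤ (layerWindow l (B (t v)) (l v) 1 \ {v}).encard +
          (layerWindow l (B (t v)) (l v) 2 \ {v}).encard + 2 := by
        refine add_le_add_left ((Set.encard_union_le _ _).trans (add_le_add_left ?_ _)) _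
        exact (Set.encard_image_le _ _).trans
          (Set.encard_le_encard (ht.neighborSet_inter_Iio_subset h hl v))
    _ = (layerWindow l (B (t v)) (l v) 1).encard +
          (layerWindow l (B (t v)) (l v) 2).encard := by
        rw [← Set.encard_sdiff_singleton_add_one (mem_window 1),
          ← Set.encard_sdiff_singleton_add_one (mem_window 2)]
        ring
    _ ≤ (2 * (1 : ℕ) + 1) * w + (2 * (2 : ℕ) + 1) * w := add_le_add (window_le 1) (window_le 2)
    _ = 8 * w := by
        push_cast
        ring

end Layering

theorem stmt2_general {G : SimpleGraph V} {Vl : ℕ → Set V} {ι : Type*} {T : SimpleGraph ι}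
    {B : ι → Set V} {w : ℕ} (hVl : IsLayering G Vl) (hTB : IsTreeDecomp G T B)
    (hw : ∀ i x, (Vl i ∩ B x).encard ≤ w) : CFChoosable G (8 * w - 1) := by
  obtain ⟨_, _, t, ht⟩ := hTB.exists_isTopNode
  obtain ⟨l, hlayer, hl⟩ := hVl.exists_layer
  simp only [hlayer] at hw
  intro L hL
  refine exists_proper_conflictFree_of_encard_conflictSet_lt fun v => ?_
  have hcard : 8 * w ≤ (L v).card + 1 := by
    exact_mod_cast sub_le_iff_le_add.1 (hL v)
  have hconflict : (conflictSet G v).encard + 1 + 1 ≤ (L v).card + 1 :=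
    calc (conflictSet G v).encard + 1 + 1 = (conflictSet G v).encard + 2 := by
          rw [add_assoc, one_add_one_eq_two]
      _ ≤ 8 * w := ht.encard_conflictSet_add_two_le hTB hl hw v
      _ ≤ (L v).card + 1 := by exact_mod_cast hcard
  exact ENat.add_one_le_natCast_iff.1 ((ENat.add_le_add_iff_right ENat.one_ne_top).1 hconflict)

theorem stmt2 (w : ℕ) (hw : 0 < w) (V : Type) [Fintype V] (G : SimpleGraph V)
    (h : ∃ (Vl : ℕ → Set V) (ι : Type) (_ : Fintype ι) (T : SimpleGraph ι) (B : ι → Set V),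
      IsLayering G Vl ∧ IsTreeDecomp G T B ∧ ∀ (i : ℕ) (x : ι), (Vl i ∩ B x).ncard ≤ w) :
    CFChoosable G ((8 * w - 1 : ℕ) : ℝ) := by
  obtain ⟨Vl, ι, -, T, B, hVl, hTB, hw'⟩ := h
  rw [Nat.cast_sub (by omega), Nat.cast_mul, Nat.cast_ofNat, Nat.cast_one]
  exact stmt2_general hVl hTB fun i x => by
    rw [← (Set.toFinite _).cast_ncard_eq]
    exact_mod_cast hw' i x

end CFPaper
end
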